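/- Let 1 ≤ p ≤ q < ∞ and let X₁, …, X_n, Y be Banach spaces. Every continuous n-linear map T : X₁ × ⋯ × X_n → Y which is (p,p)-semi-integral is (q,q)-semi-integral. -/

import Mathlib

open scoped BigOperators

/-- A continuous `n`-linear map `T : X₁ × ⋯ × X_n → Y` is `(q,p)`-semi-integral if there is
`C ≥ 0` with `(∑ⱼ ‖T(xⱼ¹,…,xⱼⁿ)‖^q)^{1/q} ≤ C (sup_{φᵢ ∈ B_{Xᵢ*}} ∑ⱼ |φ₁(xⱼ¹)⋯φₙ(xⱼⁿ)|^p)^{1/p}`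
for all finite families. -/
def IsSemiIntegral {𝕜 : Type*} [RCLike 𝕜] {n : ℕ} {X : Fin n → Type*}
    [∀ i, NormedAddCommGroup (X i)] [∀ i, NormedSpace 𝕜 (X i)]
    {Y : Type*} [NormedAddCommGroup Y] [NormedSpace 𝕜 Y]
    (q p : ℝ) (T : ContinuousMultilinearMap 𝕜 X Y) : Prop :=
  ∃ C : ℝ, 0 ≤ C ∧ ∀ (m : ℕ) (x : Fin m → ∀ i, X i),
    (∑ j, ‖T (x j)‖ ^ q) ^ (1 / q) ≤
      C * (⨆ φ : ∀ i, {φ : X i →L[𝕜] 𝕜 // ‖φ‖ ≤ 1},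
        ∑ j, (∏ i, ‖(φ i).1 (x j i)‖) ^ p) ^ (1 / p)

theorem semi_bdd {𝕜 : Type*} [RCLike 𝕜] {n : ℕ} {X : Fin n → Type*}
    [∀ i, NormedAddCommGroup (X i)] [∀ i, NormedSpace 𝕜 (X i)]
    (q : ℝ) (hq : 0 ≤ q) (m : ℕ) (x : Fin m → ∀ i, X i) :
    BddAbove (Set.range fun φ : ∀ i, {φ : X i →L[𝕜] 𝕜 // ‖φ‖ ≤ 1} =>
        ∑ j, (∏ i, ‖(φ i).1 (x j i)‖) ^ q) := by
  refine ⟨∑ j, (∏ i, ‖x j i‖) ^ q, ?_⟩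
  rintro _ ⟨φ, rfl⟩
  refine Finset.sum_le_sum fun j _ => ?_
  refine Real.rpow_le_rpow (Finset.prod_nonneg fun i _ => norm_nonneg _) ?_ hq
  refine Finset.prod_le_prod (fun i _ => norm_nonneg _) fun i _ => ?_
  simpa using (φ i).1.le_of_opNorm_le (φ i).2 (x j i)

/-- If `1 ≤ p ≤ q < ∞` and `X₁, …, X_n, Y` are Banach spaces, every
continuous `n`-linear `(p,p)`-semi-integral map is `(q,q)`-semi-integral. -/
theorem stmt4 {𝕜 : Type*} [RCLike 𝕜] {n : ℕ} {X : Fin n → Type*}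
    [∀ i, NormedAddCommGroup (X i)] [∀ i, NormedSpace 𝕜 (X i)]
    [∀ i, CompleteSpace (X i)]
    {Y : Type*} [NormedAddCommGroup Y] [NormedSpace 𝕜 Y] [CompleteSpace Y]
    (p q : ℝ) (hp : 1 ≤ p) (hpq : p ≤ q)
    (T : ContinuousMultilinearMap 𝕜 X Y)
    (hT : IsSemiIntegral p p T) :
    IsSemiIntegral q q T := by
  have hp0 : 0 < p := by linarith
  have hq0 : 0 < q := by linarith
  rcases Nat.eq_zero_or_pos n with hn | hn
  · subst hn
    refine ⟨‖T (fun i => i.elim0)‖, norm_nonneg _, fun m x => ?_⟩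
    have h : ∀ j, T (x j) = T (fun i => i.elim0) := fun j => by
      congr 1; ext i; exact i.elim0
    simp only [h, Finset.univ_eq_empty, Finset.prod_empty, Real.one_rpow, ciSup_const,
      Finset.sum_const, nsmul_eq_mul, mul_one]
    rw [Real.mul_rpow (by positivity) (by positivity), ← Real.rpow_mul (norm_nonneg _),
      mul_one_div_cancel hq0.ne', Real.rpow_one, mul_comm]
  rcases hpq.eq_or_lt with rfl | hlt
  · exact hT
  obtain ⟨C, hC, H⟩ := hT
  refine ⟨C, hC, fun m x => ?_⟩
  have hqp : 0 < q - p := by linarith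
  set S := ∑ j, ‖T (x j)‖ ^ q with hS
  set M := ⨆ φ : ∀ i, {φ : X i →L[𝕜] 𝕜 // ‖φ‖ ≤ 1},
        ∑ j, (∏ i, ‖(φ i).1 (x j i)‖) ^ q with hM
  have hS0 : 0 ≤ S := Finset.sum_nonneg fun j _ => by positivity
  have hM0 : 0 ≤ M := Real.iSup_nonneg fun φ => Finset.sum_nonneg fun j _ =>
    Real.rpow_nonneg (Finset.prod_nonneg fun i _ => norm_nonneg _) _
  rcases hS0.eq_or_lt with h0 | hSpos
  · rw [← h0, Real.zero_rpow (by positivity)]; positivity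
  set l : Fin m → ℝ := fun j => ‖T (x j)‖ ^ ((q - p) / p) with hl
  have hl0 : ∀ j, 0 ≤ l j := fun j => by positivity
  have hlp : ∀ j, l j ^ p = ‖T (x j)‖ ^ (q - p) := fun j => by
    rw [hl, ← Real.rpow_mul (norm_nonneg _), div_mul_cancel₀ _ hp0.ne']
  let c : Fin m → Fin n → 𝕜 := fun j i => if i = ⟨0, hn⟩ then (l j : 𝕜) else 1
  have hc : ∀ j, ∏ i, c j i = (l j : 𝕜) := fun j => by simp [c]
  have hcn : ∀ j, ∏ i, ‖c j i‖ = l j := fun j => by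
    rw [← norm_prod, hc, RCLike.norm_ofReal, abs_of_nonneg (hl0 j)]
  have key := H m (fun j i => c j i • x j i)
  have hL : ∀ j, ‖T (fun i => c j i • x j i)‖ ^ p = ‖T (x j)‖ ^ q := fun j => by
    rw [T.map_smul_univ, norm_smul, norm_prod, hcn,
      Real.mul_rpow (hl0 j) (norm_nonneg _), hlp,
      ← Real.rpow_add_of_nonneg (norm_nonneg _) hqp.le hp0.le]
    congr 1; ring
  simp only [hL] at key
  have hsup : (⨆ φ : ∀ i, {φ : X i →L[𝕜] 𝕜 // ‖φ‖ ≤ 1},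
        ∑ j, (∏ i, ‖(φ i).1 (c j i • x j i)‖) ^ p) ≤ S ^ ((q - p) / q) * M ^ (p / q) := by
    refine Real.iSup_le (fun φ => ?_) (by positivity)
    have ha0 : ∀ j, 0 ≤ ∏ i, ‖(φ i).1 (x j i)‖ := fun j =>
      Finset.prod_nonneg fun i _ => norm_nonneg _
    have e : ∀ j, (∏ i, ‖(φ i).1 (c j i • x j i)‖) ^ p
        = ‖T (x j)‖ ^ (q - p) * (∏ i, ‖(φ i).1 (x j i)‖) ^ p := fun j => by
      simp only [map_smul, norm_smul, Finset.prod_mul_distrib, hcn]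
      rw [Real.mul_rpow (hl0 j) (ha0 j), hlp]
    simp only [e]
    have hconj : (q / (q - p)).HolderConjugate (q / p) := by
      rw [Real.holderConjugate_iff]
      refine ⟨(one_lt_div hqp).2 (by linarith), ?_⟩
      field_simp
      ring
    have hol := Real.inner_le_Lp_mul_Lq_of_nonneg Finset.univ hconj
      (f := fun j => ‖T (x j)‖ ^ (q - p)) (g := fun j => (∏ i, ‖(φ i).1 (x j i)‖) ^ p)
      (fun j _ => by positivity) (fun j _ => Real.rpow_nonneg (ha0 j) _)
    have e1 : ∀ j, (‖T (x j)‖ ^ (q - p)) ^ (q / (q - p)) = ‖T (x j)‖ ^ q := fun j => by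
      rw [← Real.rpow_mul (norm_nonneg _), mul_div_cancel₀ _ hqp.ne']
    have e2 : ∀ j, ((∏ i, ‖(φ i).1 (x j i)‖) ^ p) ^ (q / p)
        = (∏ i, ‖(φ i).1 (x j i)‖) ^ q := fun j => by
      rw [← Real.rpow_mul (ha0 j), mul_div_cancel₀ _ hp0.ne']
    simp only [e1, e2, one_div_div] at hol
    refine hol.trans ?_
    refine mul_le_mul_of_nonneg_left ?_ (by positivity)
    refine Real.rpow_le_rpow (Finset.sum_nonneg fun j _ => Real.rpow_nonneg (ha0 j) _) ?_
      (by positivity)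
    exact le_ciSup (semi_bdd q hq0.le m x) φ
  have hsup0 : 0 ≤ (⨆ φ : ∀ i, {φ : X i →L[𝕜] 𝕜 // ‖φ‖ ≤ 1},
        ∑ j, (∏ i, ‖(φ i).1 (c j i • x j i)‖) ^ p) :=
    Real.iSup_nonneg fun φ => Finset.sum_nonneg fun j _ =>
      Real.rpow_nonneg (Finset.prod_nonneg fun i _ => norm_nonneg _) _
  have k2 := key.trans (mul_le_mul_of_nonneg_left
    (Real.rpow_le_rpow hsup0 hsup (by positivity : 0 ≤ 1 / p)) hC)
  rw [Real.mul_rpow (by positivity) (by positivity), ← Real.rpow_mul hS0, ← Real.rpow_mul hM0] at k2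
  have x1 : p / q * (1 / p) = 1 / q := by field_simp
  have x2 : 1 / p = (q - p) / q * (1 / p) + 1 / q := by field_simp; ring
  rw [x1] at k2
  have x3 : S ^ (1 / p) = S ^ ((q - p) / q * (1 / p)) * S ^ (1 / q) := by
    rw [← Real.rpow_add hSpos, ← x2]
  rw [← hS, x3] at k2
  have hpos : 0 < S ^ ((q - p) / q * (1 / p)) := Real.rpow_pos_of_pos hSpos _
  refine le_of_mul_le_mul_left ?_ hpos
  calc _ ≤ _ := k2
    _ = _ := by ring
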